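/- Let G be a finite group and k a field whose characteristic does not divide |G|. An element r of the group Hopf algebra kG satisfies the 1-dimensional partial comodule equations if and only if there exist a subgroup K ≤ G and an element g ∈ G such that r = |K|⁻¹ · Σ_{h ∈ K} g·h. (Equivalently: every 1-dimensional partial kG-comodule is a translate by a group element of the normalized integral of a subgroup of G.) -/

import Mathlib

open TensorProduct

/-- The comultiplication of the group Hopf algebra `kG`, determined by `Δ(g) = g ⊗ g`. -/
noncomputable def gaComul (k G : Type*) [Field k] [Group G] :
    MonoidAlgebra k G →ₗ[k] MonoidAlgebra k G ⊗[k] MonoidAlgebra k G :=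
  (Finsupp.lsum k fun g => LinearMap.toSpanSingleton k _
    (MonoidAlgebra.of k G g ⊗ₜ[k] MonoidAlgebra.of k G g)) ∘ₗ
    (MonoidAlgebra.coeffLinearEquiv k).toLinearMap

/-- The counit of the group Hopf algebra `kG`, determined by `ε(g) = 1`. -/
noncomputable def gaCounit (k G : Type*) [Field k] [Group G] :
    MonoidAlgebra k G →ₗ[k] k :=
  (Finsupp.lsum k fun _ : G => (LinearMap.id : k →ₗ[k] k)) ∘ₗ
    (MonoidAlgebra.coeffLinearEquiv k).toLinearMap

/-- The antipode of the group Hopf algebra `kG`, determined by `S(g) = g⁻¹`. -/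
noncomputable def gaAntipode (k G : Type*) [Field k] [Group G] :
    MonoidAlgebra k G →ₗ[k] MonoidAlgebra k G :=
  MonoidAlgebra.mapDomainLinearMap k k (fun g : G => g⁻¹)

/-- The five 1-dimensional partial comodule equations for an element `r` of the group Hopf
algebra `kG`. -/
def GAOneDimPCM (k : Type*) {G : Type*} [Field k] [Group G] (r : MonoidAlgebra k G) : Prop :=
  gaCounit k G r = 1
  ∧ r ⊗ₜ[k] (r * gaAntipode k G r)
      = gaComul k G r * ((1 : MonoidAlgebra k G) ⊗ₜ[k] gaAntipode k G r)
  ∧ (r ⊗ₜ[k] (1 : MonoidAlgebra k G)) *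
        (LinearMap.rTensor (MonoidAlgebra k G) (gaAntipode k G) (gaComul k G r))
      = (r * gaAntipode k G r) ⊗ₜ[k] r
  ∧ r ⊗ₜ[k] (gaAntipode k G r * r)
      = (LinearMap.lTensor (MonoidAlgebra k G) (gaAntipode k G) (gaComul k G r))
          * ((1 : MonoidAlgebra k G) ⊗ₜ[k] r)
  ∧ (gaAntipode k G r * r) ⊗ₜ[k] r
      = ((gaAntipode k G r) ⊗ₜ[k] (1 : MonoidAlgebra k G)) * gaComul k G r

/-!
Since `Δ(r) = ∑ r(x) x ⊗ x` and the group elements form a basis, each of the four tensor equations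
has the form `∑ r(x) x ⊗ L(x) = r ⊗ L(r)`, up to swapping the factors, for a linear map `L` such as
`x ↦ x S(r)`. As `ε(r) = 1`, this says that `L` takes equal values at all points of the support
of `r`. In coefficients, the equations therefore say that the functions `z ↦ r(zx)` coincide for all
`x` in the support, and that so do the functions `z ↦ r(xz)`. The first condition puts `x⁻¹y` in the
stabilizer `K` of `r` under right translation for all `x`, `y` in the support, so `r` is constant on
a single left coset of `K` and vanishes elsewhere; `ε(r) = 1` determines the constant.
Conversely, a multiple of the indicator function of a left coset satisfies both conditions.
-/

open Function MonoidAlgebra Pointwise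

section Translates

variable {G α : Type*} [Group G]

/-- The points `x` of the support of `f` all define the same function `z ↦ f (z * x)`. For the
coefficient function of an element of counit `1`, this is equivalent to each of the two partial
comodule equations involving `r S(r)`. -/
def RightTranslatesAgree [Zero α] (f : G → α) : Prop :=
  ∀ x ∈ support f, ∀ y ∈ support f, ∀ z, f (z * x) = f (z * y)

/-- The points `x` of the support of `f` all define the same function `z ↦ f (x * z)`. For the
coefficient function of an element of counit `1`, this is equivalent to each of the two partial
comodule equations involving `S(r) r`. -/
def LeftTranslatesAgree [Zero α] (f : G → α) : Prop :=
  ∀ x ∈ support f, ∀ y ∈ support f, ∀ z, f (x * z) = f (y * z)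

/-- The subgroup of those `h` for which `f` is invariant under right translation by `h`. For
the coefficient function of a solution of the partial comodule equations, it is the subgroup `K`
whose normalized integral the solution translates. -/
def rightStabilizer (f : G → α) : Subgroup G where
  carrier := {h | ∀ x, f (x * h) = f x}
  one_mem' := by simp
  mul_mem' {a b} ha hb x := by rw [← mul_assoc, hb, ha]
  inv_mem' {a} ha x := by rw [← ha (x * a⁻¹), inv_mul_cancel_right]

theorem mem_rightStabilizer {f : G → α} {h : G} :
    h ∈ rightStabilizer f ↔ ∀ x, f (x * h) = f x :=
  Iff.rfl

theorem finite_rightStabilizer [Zero α] {f : G → α} (hf : (support f).Finite) {g : G}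
    (hg : g ∈ support f) : Finite (rightStabilizer f) := by
  refine Set.Finite.of_finite_image (f := (g * ·)) (hf.subset ?_) (mul_right_injective g).injOn
  rintro _ ⟨h, hh, rfl⟩
  simpa only [mem_support, mem_rightStabilizer.1 hh g] using hg

theorem RightTranslatesAgree.eq_indicator [Zero α] {f : G → α} (hf : RightTranslatesAgree f)
    {g : G} (hg : g ∈ support f) :
    f = (g • (rightStabilizer f : Set G)).indicator fun _ ↦ f g := by
  ext x
  by_cases hx : x ∈ g • (rightStabilizer f : Set G)
  · rw [Set.indicator_of_mem hx]
    simpa using mem_rightStabilizer.1 ((mem_leftCoset_iff g).1 hx) g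
  · rw [Set.indicator_of_notMem hx]
    contrapose! hx
    refine (mem_leftCoset_iff g).2 fun y ↦ ?_
    rw [← mul_assoc, hf x hx g hg, inv_mul_cancel_right]

theorem rightTranslatesAgree_indicator [Zero α] (K : Subgroup G) (g : G) (c : α) :
    RightTranslatesAgree ((g • (K : Set G)).indicator fun _ ↦ c) := by
  intro x hx y hy z
  obtain ⟨a, ha : a ∈ K, rfl⟩ := Set.support_indicator_subset hx
  obtain ⟨b, hb : b ∈ K, rfl⟩ := Set.support_indicator_subset hy
  classical
  simp [Set.indicator_apply, mem_leftCoset_iff, ← mul_assoc, K.mul_mem_cancel_right, ha, hb]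

theorem leftTranslatesAgree_indicator [Zero α] (K : Subgroup G) (g : G) (c : α) :
    LeftTranslatesAgree ((g • (K : Set G)).indicator fun _ ↦ c) := by
  intro x hx y hy z
  obtain ⟨a, ha : a ∈ K, rfl⟩ := Set.support_indicator_subset hx
  obtain ⟨b, hb : b ∈ K, rfl⟩ := Set.support_indicator_subset hy
  classical
  simp [Set.indicator_apply, mem_leftCoset_iff, mul_assoc, K.mul_mem_cancel_left, ha, hb]

end Translates

section TensorProductAlgebra

variable {R A B : Type*} [CommSemiring R] [Semiring A] [Algebra R A] [Semiring B] [Algebra R B]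

theorem mul_one_tmul (t : A ⊗[R] B) (b : B) :
    t * ((1 : A) ⊗ₜ[R] b) = (LinearMap.mulRight R b).lTensor A t := by
  rw [← LinearMap.mulRight_apply R, LinearMap.mulRight_tmul, LinearMap.mulRight_one]
  rfl

theorem tmul_one_mul (a : A) (t : A ⊗[R] B) :
    (a ⊗ₜ[R] (1 : B)) * t = (LinearMap.mulLeft R a).rTensor B t := by
  rw [← LinearMap.mulLeft_apply R, LinearMap.mulLeft_tmul, LinearMap.mulLeft_one]
  rfl

end TensorProductAlgebra

theorem natCast_card_subgroup_ne_zero {R G : Type*} [Semiring R] [Group G]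
    (hG : (Nat.card G : R) ≠ 0) (K : Subgroup G) : (Nat.card K : R) ≠ 0 :=
  ne_zero_of_dvd_ne_zero hG (Nat.cast_dvd_cast K.card_subgroup_dvd_card)

/-- The sum of the elements of the left coset `gK`, which is the translate by `g` of the
unnormalized integral of the finite subgroup `K`. -/
noncomputable def cosetSum (k : Type*) {G : Type*} [Semiring k] [Group G] (K : Subgroup G)
    [Finite K] (g : G) : MonoidAlgebra k G :=
  ∑ h ∈ (K : Set G).toFinite.toFinset, single (g * h) (1 : k)

theorem coeff_smul_cosetSum {k G : Type*} [Semiring k] [Group G] (K : Subgroup G) [Finite K]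
    (g : G) (c : k) :
    ⇑(c • cosetSum k K g).coeff = (g • (K : Set G)).indicator fun _ ↦ c := by
  classical
  ext x
  simp [cosetSum, Finsupp.single_apply, Set.indicator_apply, mem_leftCoset_iff,
    ← eq_inv_mul_iff_mul_eq]

theorem map_eq_sum_coeff_smul {k G M : Type*} [Semiring k] [AddCommMonoid M] [Module k M]
    (L : MonoidAlgebra k G →ₗ[k] M) (r : MonoidAlgebra k G) :
    L r = r.coeff.sum fun x a ↦ a • L (single x 1) := by
  rw [← (basis G k).linearCombination_repr r, Finsupp.apply_linearCombination,
    (basis G k).linearCombination_repr r]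
  rfl

section GroupHopfAlgebra

variable {k G M : Type*} [Field k] [Group G] [AddCommGroup M] [Module k M]

theorem gaComul_single (g : G) (a : k) :
    gaComul k G (single g a) = a • (single g (1 : k) ⊗ₜ[k] single g (1 : k)) := by
  simp [gaComul]

theorem gaCounit_single (g : G) (a : k) : gaCounit k G (single g a) = a := by
  simp [gaCounit]

theorem gaAntipode_single (g : G) (a : k) : gaAntipode k G (single g a) = single g⁻¹ a := by
  simp [gaAntipode]

theorem coeff_gaAntipode (r : MonoidAlgebra k G) (g : G) :
    (gaAntipode k G r).coeff g = r.coeff g⁻¹ := by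
  simpa [gaAntipode] using Finsupp.mapDomain_apply inv_injective r.coeff g⁻¹

theorem gaCounit_cosetSum (K : Subgroup G) [Finite K] (g : G) :
    gaCounit k G (cosetSum k K g) = Nat.card K := by
  simp [cosetSum, gaCounit_single, ← Set.ncard_eq_toFinset_card, ← Nat.card_coe_set_eq]

theorem comm_gaComul (r : MonoidAlgebra k G) :
    TensorProduct.comm k _ _ (gaComul k G r) = gaComul k G r := by
  induction r using MonoidAlgebra.induction_linear with
  | zero => simp
  | add r s hr hs => simp only [map_add, hr, hs]
  | single x a => simp [gaComul_single]

theorem equivFinsuppOfBasisLeft_lTensor_gaComul [DecidableEq G] (L : MonoidAlgebra k G →ₗ[k] M)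
    (r : MonoidAlgebra k G) (x : G) :
    equivFinsuppOfBasisLeft (basis G k) (L.lTensor _ (gaComul k G r)) x =
      r.coeff x • L (single x 1) := by
  induction r using MonoidAlgebra.induction_linear with
  | zero => simp
  | add r s hr hs => simp only [map_add, Finsupp.add_apply, coeff_add, hr, hs, add_smul]
  | single y a => by_cases h : y = x <;> simp [gaComul_single, basis, h]

theorem lTensor_gaComul_eq_tmul_iff_forall_mem_support (L : MonoidAlgebra k G →ₗ[k] M)
    (r : MonoidAlgebra k G) (m : M) :
    L.lTensor _ (gaComul k G r) = r ⊗ₜ[k] m ↔ ∀ x ∈ support r.coeff, L (single x 1) = m := by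
  classical
  rw [← (equivFinsuppOfBasisLeft (basis G k)).injective.eq_iff, Finsupp.ext_iff]
  refine forall_congr' fun x ↦ ?_
  rw [equivFinsuppOfBasisLeft_lTensor_gaComul, equivFinsuppOfBasisLeft_apply_tmul_apply]
  change r.coeff x • L (single x 1) = r.coeff x • m ↔ _
  by_cases hx : r.coeff x = 0
  · simp [hx]
  · simp [hx, smul_right_inj hx]

theorem map_eq_gaCounit_smul (L : MonoidAlgebra k G →ₗ[k] M) {r : MonoidAlgebra k G} {m : M}
    (h : ∀ x ∈ support r.coeff, L (single x 1) = m) : L r = gaCounit k G r • m := by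
  calc L r = r.coeff.sum fun x a ↦ a • L (single x 1) := map_eq_sum_coeff_smul L r
    _ = r.coeff.sum fun _ a ↦ a • m :=
      Finsupp.sum_congr fun x hx ↦ by rw [h x (Finsupp.mem_support_iff.1 hx)]
    _ = gaCounit k G r • m := by
      simp [map_eq_sum_coeff_smul (gaCounit k G) r, gaCounit_single, Finsupp.sum, Finset.sum_smul]

theorem lTensor_gaComul_eq_tmul_iff (L : MonoidAlgebra k G →ₗ[k] M) {r : MonoidAlgebra k G}
    (hr : gaCounit k G r = 1) :
    L.lTensor _ (gaComul k G r) = r ⊗ₜ[k] L r ↔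
      ∀ x ∈ support r.coeff, ∀ y ∈ support r.coeff, L (single x 1) = L (single y 1) := by
  rw [lTensor_gaComul_eq_tmul_iff_forall_mem_support]
  refine ⟨fun h x hx y hy ↦ (h x hx).trans (h y hy).symm, fun h x hx ↦ ?_⟩
  rw [map_eq_gaCounit_smul L fun y hy ↦ h y hy x hx, hr, one_smul]

theorem rTensor_gaComul_eq_tmul_iff (L : MonoidAlgebra k G →ₗ[k] M) {r : MonoidAlgebra k G}
    (hr : gaCounit k G r = 1) :
    L.rTensor _ (gaComul k G r) = L r ⊗ₜ[k] r ↔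
      ∀ x ∈ support r.coeff, ∀ y ∈ support r.coeff, L (single x 1) = L (single y 1) := by
  rw [← lTensor_gaComul_eq_tmul_iff L hr, ← (TensorProduct.comm k _ _).injective.eq_iff,
    TensorProduct.comm_tmul, ← LinearMap.lTensor_comm, comm_gaComul]

theorem tmul_mul_gaAntipode_eq_iff {r : MonoidAlgebra k G} (hr : gaCounit k G r = 1) :
    r ⊗ₜ[k] (r * gaAntipode k G r) =
        gaComul k G r * ((1 : MonoidAlgebra k G) ⊗ₜ[k] gaAntipode k G r) ↔
      RightTranslatesAgree r.coeff := by
  rw [mul_one_tmul, eq_comm]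
  refine (lTensor_gaComul_eq_tmul_iff (LinearMap.mulRight k (gaAntipode k G r)) hr).trans ?_
  -- The coefficient of `x S(r)` at `z` is `r(z⁻¹x)`, so `z` has to be replaced by `z⁻¹`.
  refine forall₄_congr fun x _ y _ ↦ ?_
  rw [MonoidAlgebra.ext_iff, Finsupp.ext_iff, ← (Equiv.inv G).forall_congr_right]
  simp [coeff_gaAntipode]

theorem tmul_one_mul_rTensor_gaAntipode_eq_iff {r : MonoidAlgebra k G}
    (hr : gaCounit k G r = 1) :
    (r ⊗ₜ[k] (1 : MonoidAlgebra k G)) *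
        LinearMap.rTensor (MonoidAlgebra k G) (gaAntipode k G) (gaComul k G r) =
        (r * gaAntipode k G r) ⊗ₜ[k] r ↔
      RightTranslatesAgree r.coeff := by
  rw [tmul_one_mul, ← LinearMap.rTensor_comp_apply]
  refine (rTensor_gaComul_eq_tmul_iff (LinearMap.mulLeft k r ∘ₗ gaAntipode k G) hr).trans ?_
  simp [RightTranslatesAgree, MonoidAlgebra.ext_iff, Finsupp.ext_iff, gaAntipode_single]

theorem tmul_gaAntipode_mul_eq_iff {r : MonoidAlgebra k G} (hr : gaCounit k G r = 1) :
    r ⊗ₜ[k] (gaAntipode k G r * r) =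
        LinearMap.lTensor (MonoidAlgebra k G) (gaAntipode k G) (gaComul k G r) *
          ((1 : MonoidAlgebra k G) ⊗ₜ[k] r) ↔
      LeftTranslatesAgree r.coeff := by
  rw [mul_one_tmul, ← LinearMap.lTensor_comp_apply, eq_comm]
  refine (lTensor_gaComul_eq_tmul_iff (LinearMap.mulRight k r ∘ₗ gaAntipode k G) hr).trans ?_
  simp [LeftTranslatesAgree, MonoidAlgebra.ext_iff, Finsupp.ext_iff, gaAntipode_single]

theorem gaAntipode_mul_tmul_eq_iff {r : MonoidAlgebra k G} (hr : gaCounit k G r = 1) :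
    (gaAntipode k G r * r) ⊗ₜ[k] r =
        (gaAntipode k G r ⊗ₜ[k] (1 : MonoidAlgebra k G)) * gaComul k G r ↔
      LeftTranslatesAgree r.coeff := by
  rw [tmul_one_mul, eq_comm]
  refine (rTensor_gaComul_eq_tmul_iff (LinearMap.mulLeft k (gaAntipode k G r)) hr).trans ?_
  -- The coefficient of `S(r) x` at `z` is `r(xz⁻¹)`, so `z` has to be replaced by `z⁻¹`.
  refine forall₄_congr fun x _ y _ ↦ ?_
  rw [MonoidAlgebra.ext_iff, Finsupp.ext_iff, ← (Equiv.inv G).forall_congr_right]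
  simp [coeff_gaAntipode]

theorem gaOneDimPCM_iff_translatesAgree {r : MonoidAlgebra k G} :
    GAOneDimPCM k r ↔
      gaCounit k G r = 1 ∧ RightTranslatesAgree r.coeff ∧ LeftTranslatesAgree r.coeff := by
  refine and_congr_right fun hr ↦ ?_
  rw [tmul_mul_gaAntipode_eq_iff hr, tmul_one_mul_rTensor_gaAntipode_eq_iff hr,
    tmul_gaAntipode_mul_eq_iff hr, gaAntipode_mul_tmul_eq_iff hr]
  tauto

theorem exists_eq_smul_cosetSum {r : MonoidAlgebra k G} (hε : gaCounit k G r = 1)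
    (hr : RightTranslatesAgree r.coeff) :
    ∃ (K : Subgroup G) (_ : Finite K) (g : G),
      (Nat.card K : k) ≠ 0 ∧ r = (Nat.card K : k)⁻¹ • cosetSum k K g := by
  obtain ⟨g, hg⟩ : (support r.coeff).Nonempty := by
    rw [support_nonempty_iff, Ne, Finsupp.coe_eq_zero, coeff_eq_zero]
    rintro rfl
    simp at hε
  have hK : Finite (rightStabilizer r.coeff) := finite_rightStabilizer r.coeff.hasFiniteSupport hg
  have hr' : r = r.coeff g • cosetSum k (rightStabilizer r.coeff) g := by
    refine coeff_injective (DFunLike.coe_injective ?_)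
    rw [coeff_smul_cosetSum]
    exact hr.eq_indicator hg
  have hcard : r.coeff g * Nat.card (rightStabilizer r.coeff) = 1 := by
    rw [← hε, ← gaCounit_cosetSum _ g, ← smul_eq_mul, ← map_smul, ← hr']
  exact ⟨rightStabilizer r.coeff, hK, g, right_ne_zero_of_mul_eq_one hcard,
    by rwa [← eq_inv_of_mul_eq_one_left hcard]⟩

end GroupHopfAlgebra

theorem stmt19_general (k G : Type*) [Field k] [Group G] (r : MonoidAlgebra k G) :
    GAOneDimPCM k r ↔
      ∃ (K : Subgroup G) (_ : Finite K) (g : G),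
        (Nat.card K : k) ≠ 0 ∧ r = (Nat.card K : k)⁻¹ • cosetSum k K g := by
  rw [gaOneDimPCM_iff_translatesAgree]
  refine ⟨fun ⟨hε, hr, _⟩ ↦ exists_eq_smul_cosetSum hε hr, ?_⟩
  rintro ⟨K, _, g, hK, rfl⟩
  rw [coeff_smul_cosetSum, map_smul, gaCounit_cosetSum]
  exact ⟨inv_mul_cancel₀ hK, rightTranslatesAgree_indicator K g _,
    leftTranslatesAgree_indicator K g _⟩

/-- let `G` be a finite group and `k` a field with `char k ∤ |G|`. An element
`r ∈ kG` satisfies the 1-dimensional partial comodule equations if and only if there are a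
subgroup `K ≤ G` and an element `g ∈ G` with `r = |K|⁻¹ · Σ_{h ∈ K} g·h`. -/
theorem stmt19 (k G : Type*) [Field k] [Group G] [Fintype G]
    (hchar : (Fintype.card G : k) ≠ 0)
    (r : MonoidAlgebra k G) :
    GAOneDimPCM k r
    ↔ ∃ (K : Subgroup G) (g : G),
        r = (Nat.card K : k)⁻¹ •
          ∑ h ∈ (K : Set G).toFinite.toFinset, MonoidAlgebra.single (g * h) (1 : k) := by
  rw [← Nat.card_eq_fintype_card] at hchar
  exact (stmt19_general k G r).trans ⟨fun ⟨K, _, g, _, h⟩ ↦ ⟨K, g, h⟩,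
    fun ⟨K, g, h⟩ ↦ ⟨K, inferInstance, g, natCast_card_subgroup_ne_zero hchar K, h⟩⟩
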